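/- Every short covering of 𝔽_8³ has at least 6 elements. -/

import Mathlib

/-!
For a word `h` and a coordinate `m`, record the ratio of the two coordinates of `h` other than `m`,
taken in cyclic order and only when both are nonzero. Covering the words with no zero coordinate
means that whenever three units have product one, one of them is a recorded ratio at its coordinate.
If no coordinate records every unit, pigeonhole in `Fˣ` shows that any two coordinates together
record at least `q - 1` ratios, so the words of `H` have at least `3 (q - 1) / 2` pairs of nonzero
coordinates in total. On the other hand, covering the words with exactly one zero coordinate forces
`H` to contain, for every `m`, a nonzero word vanishing at `m`. There are at least two such words,
with at least three zeros in total, and one with `z` zeros has at most `2 - z` pairs instead of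
three. This leaves at most `3 |H| - 5` pairs, so `3 q + 7 ≤ 6 |H|`.
-/

open Set Pointwise

variable {F : Type*} [Field F]

/-- Hamming distance on `𝔽_q³`. -/
noncomputable def hdist (u v : Fin 3 → F) : ℕ := Set.ncard {i : Fin 3 | u i ≠ v i}

/-- The ball of radius 1 centered at `u`. -/
def ball (u : Fin 3 → F) : Set (Fin 3 → F) := {v | hdist u v ≤ 1}

/-- The extended ball of `u`: the union of the balls centered at scalar multiples of `u`. -/
def extBall (u : Fin 3 → F) : Set (Fin 3 → F) := ⋃ l : F, ball (l • u)

/-- `D_q`: vectors with pairwise distinct, nonzero coordinates. -/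
def Dq : Set (Fin 3 → F) :=
  {u | u 0 ≠ u 1 ∧ u 0 ≠ u 2 ∧ u 1 ≠ u 2 ∧ u 0 ≠ 0 ∧ u 1 ≠ 0 ∧ u 2 ≠ 0}

/-- `B̃(u) = B(u) ∩ D_q`. -/
def ballD (u : Fin 3 → F) : Set (Fin 3 → F) := ball u ∩ Dq

/-- `Ẽ(u) = E(u) ∩ D_q`. -/
def extBallD (u : Fin 3 → F) : Set (Fin 3 → F) := extBall u ∩ Dq

/-- `H` is a short covering if the extended balls centered at its elements cover the space. -/
def ShortCovering (H : Set (Fin 3 → F)) : Prop := (⋃ h ∈ H, extBall h) = Set.univ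

section Group

variable {G : Type*} [Group G]

theorem exists_notMem_mul_eq_of_ncard_add_ncard_lt {A B : Set G}
    (hAB : A.ncard + B.ncard < Nat.card G) (c : G) : ∃ a ∉ A, ∃ b ∉ B, a * b = c := by
  have : Finite G := Nat.finite_of_card_ne_zero (by omega)
  have hlt : A.ncard + (c • B⁻¹).ncard < Nat.card G := by rwa [ncard_smul_set, ncard_inv]
  obtain ⟨a, haA, haB⟩ := nonempty_inter_compl_of_ncard_add_ncard_lt hlt
  exact ⟨a, haA, a⁻¹ * c, by simpa [mem_smul_set_iff_inv_smul_mem] using haB,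
    mul_inv_cancel_left a c⟩

theorem natCard_le_ncard_add_ncard_of_mul_eq_one {A B C : Set G} (hC : C ≠ univ)
    (h : ∀ a b c, a * b * c = 1 → a ∈ A ∨ b ∈ B ∨ c ∈ C) : Nat.card G ≤ A.ncard + B.ncard := by
  by_contra! hlt
  obtain ⟨c, hc⟩ := (ne_univ_iff_exists_notMem C).1 hC
  obtain ⟨a, ha, b, hb, hab⟩ := exists_notMem_mul_eq_of_ncard_add_ncard_lt hlt c⁻¹
  have := h a b c (by rw [hab, inv_mul_cancel])
  tauto

theorem three_mul_natCard_le_two_mul_sum_ncard {R : Fin 3 → Set G} (hR : ∀ m, R m ≠ univ)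
    (h : ∀ r : Fin 3 → G, r 0 * r 1 * r 2 = 1 → ∃ m, r m ∈ R m) :
    3 * Nat.card G ≤ 2 * ∑ m, (R m).ncard := by
  have h' (a b c : G) (habc : a * b * c = 1) : a ∈ R 0 ∨ b ∈ R 1 ∨ c ∈ R 2 := by
    simpa [Fin.exists_fin_succ] using h ![a, b, c] habc
  have h_rotate {a b c : G} (habc : a * b * c = 1) : c * a * b = 1 := by
    rwa [mul_assoc, mul_eq_one_comm]
  have h₀₁ := natCard_le_ncard_add_ncard_of_mul_eq_one (hR 2) h'
  have h₁₂ := natCard_le_ncard_add_ncard_of_mul_eq_one (hR 0) fun b c a hbca =>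
    or_rotate.1 (h' a b c (h_rotate hbca))
  have h₂₀ := natCard_le_ncard_add_ncard_of_mul_eq_one (hR 1) fun c a b hcab =>
    or_rotate.1 (or_rotate.1 (h' a b c (h_rotate (h_rotate hcab))))
  rw [Fin.sum_univ_three]
  omega

end Group

section Counting

variable {M : Type*} [Zero M]

theorem one_lt_card_of_forall_exists_apply_eq_zero {ι : Type*} [Nonempty ι] {Z : Finset (ι → M)}
    (h_ne : ∀ h ∈ Z, h ≠ 0) (h_zero : ∀ i, ∃ h ∈ Z, h i = 0) : 1 < Z.card := by
  by_contra! hZ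
  obtain ⟨h, hh, -⟩ := h_zero (Classical.arbitrary ι)
  refine h_ne h hh (funext fun i => ?_)
  obtain ⟨g, hg, hgi⟩ := h_zero i
  rwa [Finset.card_le_one.1 hZ h hh g hg]

variable [DecidableEq M]

theorem card_le_sum_card_zeros {ι : Type*} [Fintype ι] {Z : Finset (ι → M)}
    (h_zero : ∀ i, ∃ h ∈ Z, h i = 0) :
    Fintype.card ι ≤ ∑ h ∈ Z, Finset.card {i | h i = 0} :=
  calc Fintype.card ι = ∑ _i : ι, 1 := Fintype.card_eq_sum_ones
    _ ≤ ∑ i, Finset.card {h ∈ Z | h i = 0} := Finset.sum_le_sum fun i _ =>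
      Finset.card_pos.2 ((h_zero i).imp fun _ => Finset.mem_filter.2)
    _ = ∑ h ∈ Z, Finset.card {i | h i = 0} :=
      Finset.sum_card_bipartiteAbove_eq_sum_card_bipartiteBelow fun i (h : ι → M) => h i = 0

theorem card_nonzero_pairs_add_card_zeros_lt {h : Fin 3 → M} (h_ne : h ≠ 0) {m : Fin 3}
    (hm : h m = 0) :
    Finset.card {k | h (k + 1) ≠ 0 ∧ h (k + 2) ≠ 0} + Finset.card {i | h i = 0} < 3 := by
  have eq_of_zero_of_pair {i k : Fin 3} (hi : h i = 0) (hk : h (k + 1) ≠ 0 ∧ h (k + 2) ≠ 0) :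
      i = k := by
    have h_cyclic : ∀ i k : Fin 3, i = k ∨ i = k + 1 ∨ i = k + 2 := by decide
    rcases h_cyclic i k with rfl | rfl | rfl
    exacts [rfl, absurd hi hk.1, absurd hi hk.2]
  set P : Finset (Fin 3) := {k | h (k + 1) ≠ 0 ∧ h (k + 2) ≠ 0} with hP
  set Z : Finset (Fin 3) := {i | h i = 0} with hZ
  rcases P.eq_empty_or_nonempty with hP_empty | ⟨k, hk⟩
  · obtain ⟨i, hi⟩ := Function.ne_iff.1 h_ne
    rw [hP_empty, Finset.card_empty, zero_add]
    exact Finset.card_lt_univ_of_notMem (x := i) (by simpa [hZ] using hi)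
  · have hk' : h (k + 1) ≠ 0 ∧ h (k + 2) ≠ 0 := by simpa [hP] using hk
    have hP_subset : P ⊆ {m} := fun j hj => by
      simpa using (eq_of_zero_of_pair hm (by simpa [hP] using hj)).symm
    have hZ_subset : Z ⊆ {k} := fun j hj => by
      simpa using eq_of_zero_of_pair (by simpa [hZ] using hj) hk'
    have hP_card := Finset.card_le_card hP_subset
    have hZ_card := Finset.card_le_card hZ_subset
    rw [Finset.card_singleton] at hP_card hZ_card
    omega

theorem sum_card_nonzero_pairs_add_five_le {H : Finset (Fin 3 → M)}
    (hH : ∀ m, ∃ h ∈ H, h ≠ 0 ∧ h m = 0) :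
    ∑ m, Finset.card {h ∈ H | h (m + 1) ≠ 0 ∧ h (m + 2) ≠ 0} + 5 ≤ 3 * H.card := by
  let Z : Finset (Fin 3 → M) := {h ∈ H | h ≠ 0 ∧ ∃ m, h m = 0}
  let pairs (h : Fin 3 → M) : ℕ := Finset.card {m | h (m + 1) ≠ 0 ∧ h (m + 2) ≠ 0}
  let zeros (h : Fin 3 → M) : ℕ := Finset.card {m | h m = 0}
  have h_zero (m : Fin 3) : ∃ h ∈ Z, h m = 0 := by
    obtain ⟨h, hh, h_ne, hm⟩ := hH m
    exact ⟨h, Finset.mem_filter.2 ⟨hh, h_ne, m, hm⟩, hm⟩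
  have two_le_card : 2 ≤ Z.card :=
    one_lt_card_of_forall_exists_apply_eq_zero (fun h hh => (Finset.mem_filter.1 hh).2.1) h_zero
  have three_le_sum_zeros : 3 ≤ ∑ h ∈ Z, zeros h := card_le_sum_card_zeros h_zero
  have h_word (h : Fin 3 → M) :
      pairs h + (if h ≠ 0 ∧ ∃ m, h m = 0 then zeros h + 1 else 0) ≤ 3 := by
    split_ifs with hZ
    · obtain ⟨h_ne, m, hm⟩ := hZ
      exact card_nonzero_pairs_add_card_zeros_lt h_ne hm
    · exact Finset.card_le_univ (Finset.filter _ (Finset.univ : Finset (Fin 3)))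
  calc ∑ m, Finset.card {h ∈ H | h (m + 1) ≠ 0 ∧ h (m + 2) ≠ 0} + 5
      = ∑ h ∈ H, pairs h + 5 := by
        congr 1
        exact Finset.sum_card_bipartiteAbove_eq_sum_card_bipartiteBelow
          fun m (h : Fin 3 → M) => h (m + 1) ≠ 0 ∧ h (m + 2) ≠ 0
    _ ≤ ∑ h ∈ H, pairs h + ∑ h ∈ Z, (zeros h + 1) := by
        rw [Finset.sum_add_distrib, Finset.sum_const, smul_eq_mul, mul_one]
        omega
    _ = ∑ h ∈ H, (pairs h + if h ≠ 0 ∧ ∃ m, h m = 0 then zeros h + 1 else 0) := by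
        rw [Finset.sum_filter, ← Finset.sum_add_distrib]
    _ ≤ 3 * H.card := by
        rw [mul_comm]
        exact Finset.sum_le_card_nsmul H _ 3 fun h _ => h_word h

end Counting

/-- The set of units `h (m + 2) / h (m + 1)`, where `h` runs over the words of `H` that are nonzero
at both coordinates other than `m`. Coordinates are cyclic, so that for a single word without zeros
the ratios at `0`, `1` and `2` multiply to one. -/
def ratios (H : Set (Fin 3 → F)) (m : Fin 3) : Set Fˣ :=
  {r | ∃ h ∈ H, h (m + 1) ≠ 0 ∧ h (m + 2) = r * h (m + 1)}

theorem ncard_ratios_le [DecidableEq F] (H : Finset (Fin 3 → F)) (m : Fin 3) :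
    (ratios (H : Set (Fin 3 → F)) m).ncard ≤
      Finset.card {h ∈ H | h (m + 1) ≠ 0 ∧ h (m + 2) ≠ 0} := by
  let P : Finset (Fin 3 → F) := {h ∈ H | h (m + 1) ≠ 0 ∧ h (m + 2) ≠ 0}
  have h_subset : Units.val '' ratios (H : Set (Fin 3 → F)) m ⊆
      P.image fun h => h (m + 2) / h (m + 1) := by
    rintro _ ⟨r, ⟨h, hh, h₁, h₂⟩, rfl⟩
    have h₂_ne : h (m + 2) ≠ 0 := h₂ ▸ mul_ne_zero r.ne_zero h₁
    exact Finset.mem_image.2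
      ⟨h, Finset.mem_filter.2 ⟨hh, h₁, h₂_ne⟩, (eq_div_of_mul_eq h₁ h₂.symm).symm⟩
  calc (ratios (H : Set (Fin 3 → F)) m).ncard
      = (Units.val '' ratios (H : Set (Fin 3 → F)) m).ncard :=
        (ncard_image_of_injective _ Units.val_injective).symm
    _ ≤ (P.image fun h => h (m + 2) / h (m + 1)).card := by
        rw [← ncard_coe_finset]
        exact ncard_le_ncard h_subset
    _ ≤ P.card := Finset.card_image_le

theorem mem_ratios_of_smul_apply_eq {H : Set (Fin 3 → F)} {h v : Fin 3 → F} {l : F} {m : Fin 3}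
    {r : Fˣ} (hh : h ∈ H) (h_eq : ∀ n ≠ m, (l • h) n = v n) (hv : v (m + 1) ≠ 0)
    (hr : v (m + 2) = r * v (m + 1)) : r ∈ ratios H m := by
  have h₁ : l * h (m + 1) = v (m + 1) := h_eq (m + 1) (by omega)
  have h₂ : l * h (m + 2) = v (m + 2) := h_eq (m + 2) (by omega)
  rw [← h₁] at hv hr
  rw [← h₂, mul_left_comm] at hr
  exact ⟨h, hh, right_ne_zero_of_mul hv, mul_left_cancel₀ (left_ne_zero_of_mul hv) hr⟩

theorem exists_forall_ne_apply_eq_of_mem_ball {α : Type*} {u v : Fin 3 → α} (hv : v ∈ ball u) :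
    ∃ m, ∀ n ≠ m, u n = v n := by
  obtain ⟨m, hm⟩ := (ncard_le_one_iff_subset_singleton (toFinite {i | u i ≠ v i})).1 hv
  exact ⟨m, fun n hn => not_not.1 fun h => hn (hm h)⟩

namespace ShortCovering

variable {H : Set (Fin 3 → F)}

theorem exists_forall_ne_smul_apply_eq (hH : ShortCovering H) (v : Fin 3 → F) :
    ∃ h ∈ H, ∃ (l : F) (m : Fin 3), ∀ n ≠ m, (l • h) n = v n := by
  have hv : v ∈ ⋃ h ∈ H, extBall h := hH ▸ mem_univ v
  simp only [extBall, mem_iUnion] at hv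
  obtain ⟨h, hh, l, hl⟩ := hv
  exact ⟨h, hh, l, exists_forall_ne_apply_eq_of_mem_ball hl⟩

theorem exists_mem_ratios (hH : ShortCovering H) (r : Fin 3 → Fˣ) (hr : r 0 * r 1 * r 2 = 1) :
    ∃ m, r m ∈ ratios H m := by
  let v : Fin 3 → Fˣ := ![1, r 2, r 2 * r 0]
  have h_ratio (m : Fin 3) : (v (m + 2) : F) = r m * v (m + 1) := by
    norm_cast
    fin_cases m
    · exact mul_comm _ _
    · change 1 = r 1 * (r 2 * r 0)
      rw [← hr]
      ac_rfl
    · exact (mul_one _).symm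
  obtain ⟨h, hh, l, m, h_eq⟩ := hH.exists_forall_ne_smul_apply_eq fun n => v n
  exact ⟨m, mem_ratios_of_smul_apply_eq hh h_eq (v (m + 1)).ne_zero (h_ratio m)⟩

theorem exists_ne_zero_apply_eq_zero (hH : ShortCovering H) {m : Fin 3}
    (hm : ratios H m ≠ univ) : ∃ h ∈ H, h ≠ 0 ∧ h m = 0 := by
  obtain ⟨r, hr⟩ := (ne_univ_iff_exists_notMem _).1 hm
  let v : Fin 3 → F := fun n => if n = m then 0 else if n = m + 1 then 1 else r
  have v_m : v m = 0 := if_pos rfl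
  have v_ne {n : Fin 3} (hn : n ≠ m) : v n ≠ 0 := by
    simp only [v, if_neg hn]
    split_ifs <;> simp
  obtain ⟨h, hh, l, k, h_eq⟩ := hH.exists_forall_ne_smul_apply_eq v
  have hkm : k ≠ m := by
    rintro rfl
    exact hr (mem_ratios_of_smul_apply_eq hh h_eq (v_ne (by omega)) (by simp [v]))
  obtain ⟨n, hnm, hnk⟩ : ∃ n, n ≠ m ∧ n ≠ k := by
    clear * -
    decide +revert
  have h_n : l * h n ≠ 0 := (h_eq n hnk).trans_ne (v_ne hnm)
  have h_m : l * h m = 0 := (h_eq m hkm.symm).trans v_m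
  refine ⟨h, hh, ?_, (mul_eq_zero.1 h_m).resolve_left (left_ne_zero_of_mul h_n)⟩
  rintro rfl
  exact right_ne_zero_of_mul h_n rfl

end ShortCovering

theorem stmt_18_general {H : Set (Fin 3 → F)} (hF : 5 ≤ Nat.card F) (hH : ShortCovering H) :
    3 * Nat.card F + 7 ≤ 6 * H.ncard := by
  classical
  have : Finite F := Nat.finite_of_card_ne_zero (by omega)
  lift H to Finset (Fin 3 → F) using H.toFinite
  rw [ncard_coe_finset]
  have h_units : Nat.card Fˣ = Nat.card F - 1 := Nat.card_units F
  by_cases h_ratios : ∀ m, ratios (H : Set (Fin 3 → F)) m ≠ univ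
  · have h_lower := three_mul_natCard_le_two_mul_sum_ncard h_ratios hH.exists_mem_ratios
    have h_pairs := Finset.sum_le_sum fun m (_ : m ∈ Finset.univ) => ncard_ratios_le H m
    have h_upper := sum_card_nonzero_pairs_add_five_le fun m =>
      hH.exists_ne_zero_apply_eq_zero (h_ratios m)
    omega
  · push Not at h_ratios
    obtain ⟨m, hm⟩ := h_ratios
    have h_card : Nat.card Fˣ ≤ H.card :=
      calc Nat.card Fˣ = (ratios (H : Set (Fin 3 → F)) m).ncard := by rw [hm, ncard_univ]
        _ ≤ _ := ncard_ratios_le H m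
        _ ≤ H.card := Finset.card_filter_le _ _
    omega

theorem stmt_18 (H : Set (Fin 3 → GaloisField 2 3)) (hH : ShortCovering H) : 6 ≤ H.ncard := by
  have h_card : Nat.card (GaloisField 2 3) = 2 ^ 3 := GaloisField.card 2 3 three_ne_zero
  have := stmt_18_general (by omega) hH
  omega
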